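/- ζ_so(2,2,2,0) = ζ_MT(2,2;2) = (8/105)·ζ(2)^3 = π^6/2835, and ζ_so(2,1,1,2) = (1/60)·ζ(2)^3 = π^6/12960, and ζ_so(0,2,2,2) = (1/105)·ζ(2)^3 = π^6/22680. -/

import Mathlib

noncomputable def zetaSO (s1 s2 s3 s4 : ℕ) : ℝ :=
  ∑' (m : ℕ+) (n : ℕ+),
    1 / ((m : ℝ) ^ s1 * (n : ℝ) ^ s2 * ((m : ℝ) + (n : ℝ)) ^ s3 * ((m : ℝ) + 2 * (n : ℝ)) ^ s4)

noncomputable def zetaMT2 (s1 s2 s : ℕ) : ℝ :=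
  ∑' (m : ℕ+) (n : ℕ+), 1 / ((m : ℝ) ^ s1 * (n : ℝ) ^ s2 * ((m : ℝ) + (n : ℝ)) ^ s)

noncomputable def rzeta (s : ℕ) : ℝ := ∑' m : ℕ+, 1 / (m : ℝ) ^ s

/-!
Evaluate `∑ 1 / (m³ n³)` in two ways. Splitting the pairs according to `m = n`, `m < n`, `m > n`
gives `ζ(6) + 2 A`, where `A = ∑ 1 / (n³ (m + n)³)`. Cubing `1 / m + 1 / n = (m + n) / (m n)` gives
`1 / (m³ n³) = 1 / (m³ (m + n)³) + 1 / (n³ (m + n)³) + 3 / (m² n² (m + n)²)`,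
hence `2 A + 3 ζ_MT(2,2;2)`. Therefore `3 ζ_MT(2,2;2) = ζ(6)`.

Splitting the pairs in `ζ_MT(2,2;2)` in the same way gives
`ζ_MT(2,2;2) = ζ(6) / 4 + 2 ζ_so(0,2,2,2)`, and `(m + 2n)² - m² = 4 n (m + n)` gives
`4 ζ_so(2,1,1,2) = ζ_so(2,2,2,0) - ζ_so(0,2,2,2)`.
-/

theorem pnat_trichotomy_bijective :
    Function.Bijective
      (Sum.elim (fun n ↦ (n, n))
          (Sum.elim (fun p ↦ (p.2, p.1 + p.2)) (fun p ↦ (p.1 + p.2, p.2))) :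
        ℕ+ ⊕ (ℕ+ × ℕ+) ⊕ (ℕ+ × ℕ+) → ℕ+ × ℕ+) := by
  constructor
  · rintro (m | ⟨m, n⟩ | ⟨m, n⟩) (k | ⟨k, l⟩ | ⟨k, l⟩) h <;>
      simp only [Sum.elim_inl, Sum.elim_inr, Prod.mk.injEq, Sum.inl.injEq, Sum.inr.injEq,
        reduceCtorEq, ← PNat.coe_inj, PNat.add_coe] at h ⊢ <;>
      have := m.pos <;> have := k.pos <;> omega
  · rintro ⟨x, y⟩
    rcases lt_trichotomy x y with h | rfl | h
    · exact ⟨.inr (.inl (y - x, x)), by simp [PNat.sub_add_of_lt h]⟩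
    · exact ⟨.inl x, rfl⟩
    · exact ⟨.inr (.inr (x - y, y)), by simp [PNat.sub_add_of_lt h]⟩

theorem hasSum_of_pnat_trichotomy {M : Type*} [AddCommMonoid M] [TopologicalSpace M]
    [ContinuousAdd M] {f : ℕ+ × ℕ+ → M} {a b c : M} (hdiag : HasSum (fun n ↦ f (n, n)) a)
    (hlt : HasSum (fun p : ℕ+ × ℕ+ ↦ f (p.2, p.1 + p.2)) b)
    (hgt : HasSum (fun p : ℕ+ × ℕ+ ↦ f (p.1 + p.2, p.2)) c) :
    HasSum f (a + (b + c)) :=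
  (Equiv.ofBijective _ pnat_trichotomy_bijective).hasSum_iff.mp (hdiag.sum (hlt.sum hgt))

theorem summable_one_div_pnat_pow {s : ℕ} (hs : 2 ≤ s) :
    Summable fun n : ℕ+ ↦ 1 / (n : ℝ) ^ s :=
  summable_pnat_iff_summable_nat.mpr (Real.summable_one_div_nat_pow.mpr hs)

theorem rzeta_eq_tsum_nat {s : ℕ} (hs : s ≠ 0) : rzeta s = ∑' n : ℕ, 1 / (n : ℝ) ^ s :=
  tsum_pnat_eq_tsum_of_eq_zero (f := fun n : ℕ ↦ 1 / (n : ℝ) ^ s) (by simp [hs])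

theorem rzeta_two : rzeta 2 = Real.pi ^ 2 / 6 := by
  rw [rzeta_eq_tsum_nat two_ne_zero, hasSum_zeta_two.tsum_eq]

theorem bernoulli_six : bernoulli 6 = 1 / 42 := by
  have bernoulli'_five : bernoulli' 5 = 0 := bernoulli'_eq_zero_of_odd (by decide) (by norm_num)
  rw [bernoulli_eq_bernoulli'_of_ne_one (by norm_num), bernoulli'_def]
  norm_num [Finset.sum_range_succ, bernoulli'_five, Nat.choose]

theorem rzeta_six : rzeta 6 = Real.pi ^ 6 / 945 := by
  rw [rzeta_eq_tsum_nat (by norm_num), (hasSum_zeta_nat three_ne_zero).tsum_eq]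
  norm_num [bernoulli_six, Nat.factorial]
  ring

/-- The summand of `zetaSO` as a function of the pair `(m, n)`, for summing over `ℕ+ × ℕ+` instead
of iteratively. -/
noncomputable def soTerm (s1 s2 s3 s4 : ℕ) (p : ℕ+ × ℕ+) : ℝ :=
  1 / ((p.1 : ℝ) ^ s1 * (p.2 : ℝ) ^ s2 * ((p.1 : ℝ) + p.2) ^ s3 * ((p.1 : ℝ) + 2 * p.2) ^ s4)

theorem soTerm_le (s1 s2 s3 s4 : ℕ) (p : ℕ+ × ℕ+) :
    soTerm s1 s2 s3 s4 p ≤ 1 / (p.1 : ℝ) ^ (s1 + s3 + s4) * (1 / (p.2 : ℝ) ^ s2) := by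
  obtain ⟨m, n⟩ := p
  have hn : (0 : ℝ) < n := mod_cast n.pos
  calc
    soTerm s1 s2 s3 s4 (m, n) ≤
        1 / ((m : ℝ) ^ s1 * (n : ℝ) ^ s2 * (m : ℝ) ^ s3 * (m : ℝ) ^ s4) := by
      unfold soTerm
      gcongr <;> linarith
    _ = 1 / (m : ℝ) ^ (s1 + s3 + s4) * (1 / (n : ℝ) ^ s2) := by ring

section Summation

variable {s1 s2 s3 s4 : ℕ}

theorem zetaSO_eq_tsum_soTerm (h : Summable (soTerm s1 s2 s3 s4)) :
    zetaSO s1 s2 s3 s4 = ∑' p, soTerm s1 s2 s3 s4 p :=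
  h.tsum_prod.symm

theorem summable_soTerm (h2 : 2 ≤ s2) (h134 : 2 ≤ s1 + s3 + s4) :
    Summable (soTerm s1 s2 s3 s4) :=
  .of_nonneg_of_le (fun p ↦ by unfold soTerm; positivity) (soTerm_le s1 s2 s3 s4)
    ((summable_one_div_pnat_pow h134).mul_of_nonneg (summable_one_div_pnat_pow h2)
      (fun _ ↦ by positivity) (fun _ ↦ by positivity))

theorem hasSum_soTerm (h2 : 2 ≤ s2) (h134 : 2 ≤ s1 + s3 + s4) :
    HasSum (soTerm s1 s2 s3 s4) (zetaSO s1 s2 s3 s4) := by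
  have h := summable_soTerm h2 h134
  rw [zetaSO_eq_tsum_soTerm h]
  exact h.hasSum

end Summation

theorem zetaSO_zero_right (s1 s2 s3 : ℕ) : zetaSO s1 s2 s3 0 = zetaMT2 s1 s2 s3 := by
  simp [zetaSO, zetaMT2]

theorem soTerm_swap (a b c : ℕ) (p : ℕ+ × ℕ+) :
    soTerm a b c 0 p.swap = soTerm b a c 0 p := by
  simp only [soTerm, Prod.fst_swap, Prod.snd_swap]
  ring

theorem soTerm_diag (a b c : ℕ) (n : ℕ+) :
    soTerm a b c 0 (n, n) = 1 / (n : ℝ) ^ (a + b + c) / 2 ^ c := by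
  simp only [soTerm, ← two_mul, mul_pow]
  ring

theorem soTerm_snd_add (a b c : ℕ) (p : ℕ+ × ℕ+) :
    soTerm a b c 0 (p.2, p.1 + p.2) = soTerm 0 a b c p := by
  simp only [soTerm, PNat.add_coe, Nat.cast_add]
  ring

theorem soTerm_add_snd (a b c : ℕ) (p : ℕ+ × ℕ+) :
    soTerm a b c 0 (p.1 + p.2, p.2) = soTerm 0 b a c p := by
  rw [← soTerm_snd_add, ← soTerm_swap, Prod.swap_prod_mk]

theorem zetaMT2_eq_rzeta_add_zetaSO {a b : ℕ} (ha : 2 ≤ a) (hb : 2 ≤ b) (c : ℕ) :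
    zetaMT2 a b c = rzeta (a + b + c) / 2 ^ c + (zetaSO 0 a b c + zetaSO 0 b a c) := by
  have hdiag : HasSum (fun n ↦ soTerm a b c 0 (n, n)) (rzeta (a + b + c) / 2 ^ c) := by
    simp only [soTerm_diag]
    exact (summable_one_div_pnat_pow (by lia)).hasSum.div_const _
  have hlt : HasSum (fun p : ℕ+ × ℕ+ ↦ soTerm a b c 0 (p.2, p.1 + p.2)) (zetaSO 0 a b c) := by
    simp only [soTerm_snd_add]
    exact hasSum_soTerm ha (by lia)
  have hgt : HasSum (fun p : ℕ+ × ℕ+ ↦ soTerm a b c 0 (p.1 + p.2, p.2)) (zetaSO 0 b a c) := by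
    simp only [soTerm_add_snd]
    exact hasSum_soTerm hb (by lia)
  rw [← zetaSO_zero_right]
  exact (hasSum_soTerm hb (by lia)).unique (hasSum_of_pnat_trichotomy hdiag hlt hgt)

theorem soTerm_three_three (c : ℕ) (p : ℕ+ × ℕ+) :
    soTerm 3 3 c 0 p =
      soTerm 0 3 (c + 3) 0 p.swap + soTerm 0 3 (c + 3) 0 p + 3 * soTerm 2 2 (c + 2) 0 p := by
  simp only [soTerm, Prod.fst_swap, Prod.snd_swap]
  field_simp
  ring

theorem zetaMT2_three_three (c : ℕ) :
    zetaMT2 3 3 c = 2 * zetaMT2 0 3 (c + 3) + 3 * zetaMT2 2 2 (c + 2) := by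
  simp only [← zetaSO_zero_right, two_mul]
  have h033 : HasSum (soTerm 0 3 (c + 3) 0) (zetaSO 0 3 (c + 3) 0) :=
    hasSum_soTerm (by lia) (by lia)
  have h033_swap : HasSum (fun p ↦ soTerm 0 3 (c + 3) 0 (Prod.swap p)) (zetaSO 0 3 (c + 3) 0) :=
    (Equiv.prodComm ℕ+ ℕ+).hasSum_iff.mpr h033
  have h222 : HasSum (soTerm 2 2 (c + 2) 0) (zetaSO 2 2 (c + 2) 0) :=
    hasSum_soTerm le_rfl (by lia)
  refine (hasSum_soTerm (by lia) (by lia)).unique ?_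
  simpa only [← soTerm_three_three] using (h033_swap.add h033).add (h222.mul_left 3)

theorem soTerm_eq_sub_div_four (s1 s2 s3 s4 : ℕ) (p : ℕ+ × ℕ+) :
    soTerm (s1 + 2) (s2 + 1) (s3 + 1) (s4 + 2) p =
      (soTerm (s1 + 2) (s2 + 2) (s3 + 2) s4 p - soTerm s1 (s2 + 2) (s3 + 2) (s4 + 2) p) / 4 := by
  simp only [soTerm]
  field_simp
  ring

theorem zetaSO_eq_sub_div_four (s1 s2 s3 s4 : ℕ) :
    zetaSO (s1 + 2) (s2 + 1) (s3 + 1) (s4 + 2) =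
      (zetaSO (s1 + 2) (s2 + 2) (s3 + 2) s4 - zetaSO s1 (s2 + 2) (s3 + 2) (s4 + 2)) / 4 := by
  have hminuend : HasSum (soTerm (s1 + 2) (s2 + 2) (s3 + 2) s4) _ :=
    hasSum_soTerm (by lia) (by lia)
  have hsubtrahend : HasSum (soTerm s1 (s2 + 2) (s3 + 2) (s4 + 2)) _ :=
    hasSum_soTerm (by lia) (by lia)
  have hsub := (hminuend.sub hsubtrahend).div_const 4
  simp only [← soTerm_eq_sub_div_four] at hsub
  rw [zetaSO_eq_tsum_soTerm hsub.summable, hsub.tsum_eq]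

theorem zetaMT2_two_two_two : zetaMT2 2 2 2 = rzeta 6 / 3 := by
  have hsplit : zetaMT2 3 3 0 = rzeta 6 + 2 * zetaMT2 0 3 3 := by
    simpa [zetaSO_zero_right, ← two_mul] using
      zetaMT2_eq_rzeta_add_zetaSO (a := 3) (b := 3) (by norm_num) (by norm_num) 0
  linarith [zetaMT2_three_three 0]

theorem zetaSO_zero_two_two_two : zetaSO 0 2 2 2 = rzeta 6 / 24 := by
  linarith [zetaMT2_eq_rzeta_add_zetaSO le_rfl le_rfl 2, zetaMT2_two_two_two]

theorem zetaSO_two_one_one_two : zetaSO 2 1 1 2 = 7 * rzeta 6 / 96 := by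
  rw [zetaSO_eq_sub_div_four 0 0 0 0, zetaSO_zero_right, zetaMT2_two_two_two,
    zetaSO_zero_two_two_two]
  ring

theorem stmt18 :
    (zetaSO 2 2 2 0 = zetaMT2 2 2 2 ∧ zetaMT2 2 2 2 = (8 / 105) * (rzeta 2) ^ 3 ∧
      (8 / 105) * (rzeta 2) ^ 3 = Real.pi ^ 6 / 2835) ∧
    (zetaSO 2 1 1 2 = (1 / 60) * (rzeta 2) ^ 3 ∧
      (1 / 60) * (rzeta 2) ^ 3 = Real.pi ^ 6 / 12960) ∧
    (zetaSO 0 2 2 2 = (1 / 105) * (rzeta 2) ^ 3 ∧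
      (1 / 105) * (rzeta 2) ^ 3 = Real.pi ^ 6 / 22680) := by
  rw [zetaSO_zero_right, zetaMT2_two_two_two, zetaSO_two_one_one_two, zetaSO_zero_two_two_two,
    rzeta_six, rzeta_two]
  refine ⟨⟨rfl, ?_, ?_⟩, ⟨?_, ?_⟩, ?_, ?_⟩ <;> ring
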